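/- Differentiability of the value function at regular points: let x ∈ Ω and suppose that A_x admits a unique minimizer φ^x on D_0^{1,2}(1,+∞), and that φ^x has a (right) derivative φ̇^x(1) at t = 1. Then v is differentiable at x and its differential is the linear map z ↦ −⟨a + φ̇^x(1), z⟩_M on X; equivalently, in terms of the motion γ^x(t) = a t + φ^x(t) + x − a, the gradient of v at x with respect to the mass inner product equals −γ̇^x(1). -/

import Mathlib

open MeasureTheory Real Set Filter Topology
open scoped RealInnerProductSpace ENNReal

noncomputable section
namespace NBodyHJ

attribute [local instance] Classical.propDecidable

abbrev Conf (d N : ℕ) := Fin N → EuclideanSpace ℝ (Fin d)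

variable {d N : ℕ}

/-- The mass inner product on the configuration space. -/
def minner (m : Fin N → ℝ) (x y : Conf d N) : ℝ := ∑ i, m i * ⟪x i, y i⟫

/-- The mass norm on the configuration space. -/
def mnorm (m : Fin N → ℝ) (x : Conf d N) : ℝ := Real.sqrt (minner m x x)

/-- Membership in the zero-barycenter configuration space `X`. -/
def inX (m : Fin N → ℝ) (x : Conf d N) : Prop := ∑ i, m i • x i = 0

/-- Collision configurations. -/
def collision (x : Conf d N) : Prop := ∃ i j, i ≠ j ∧ x i = x j

/-- Membership in the collision-free zero-barycenter space `Ω`. -/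
def inOmega (m : Fin N → ℝ) (x : Conf d N) : Prop := inX m x ∧ ¬ collision x

/-- The Newtonian potential (with junk value `0` for a colliding pair). -/
def U (m : Fin N → ℝ) (x : Conf d N) : ℝ :=
  ∑ i : Fin N, ∑ j : Fin N, if i < j then m i * m j / ‖x i - x j‖ else 0

/-- The time interval `(t₀, T)`, where `T ∈ (t₀, +∞]` is extended-real. -/
def timeSet (t0 : ℝ) (T : EReal) : Set ℝ := {t : ℝ | t0 < t ∧ (t : EReal) < T}

/-- Membership of the pair (curve, derivative) `(φ, φ')` in `D₀^{1,2}(t₀, T)`: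
`φ` starts at `0`, takes values in `X`, is the integral of `φ'` (hence locally
absolutely continuous), and `φ'` has finite `L²` mass norm on `(t₀, T)`. -/
def InD (m : Fin N → ℝ) (t0 : ℝ) (T : EReal) (φ φ' : ℝ → Conf d N) : Prop :=
  φ t0 = 0 ∧
  (∀ t : ℝ, t0 ≤ t → (t : EReal) < T → inX m (φ t)) ∧
  (∀ t : ℝ, t0 ≤ t → (t : EReal) < T → φ t = ∫ s in Set.Ioc t0 t, φ' s) ∧
  (∀ t : ℝ, t0 ≤ t → (t : EReal) < T → IntegrableOn φ' (Set.Ioc t0 t)) ∧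
  IntegrableOn (fun t => (mnorm m (φ' t)) ^ 2) (timeSet t0 T)

/-- The norm `‖φ‖_{D_T}`. -/
def Dnorm (m : Fin N → ℝ) (t0 : ℝ) (T : EReal) (φ' : ℝ → Conf d N) : ℝ :=
  Real.sqrt (∫ t in timeSet t0 T, (mnorm m (φ' t)) ^ 2)

/-- The motion `γ(t) = φ(t) + t a + x - a` associated with `φ` in the hyperbolic case. -/
def hypCurve (a x : Conf d N) (φ : ℝ → Conf d N) (t : ℝ) : Conf d N :=
  φ t + t • a + x - a

/-- The integrand of the hyperbolic renormalized Lagrangian action. -/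
def hypIntegrand (m : Fin N → ℝ) (a x : Conf d N) (φ φ' : ℝ → Conf d N) (t : ℝ) : ℝ :=
  (mnorm m (φ' t)) ^ 2 / 2 + U m (hypCurve a x φ t) - U m (t • a)

/-- The hyperbolic renormalized Lagrangian action `A_{x,[1,T]}(φ)`, with values in
`ℝ ∪ {+∞}` : it equals the integral of the renormalized Lagrangian if this integrand is
integrable and the motion is a.e. collision-free, and `+∞` otherwise. -/
def hypAction (m : Fin N → ℝ) (a x : Conf d N) (T : EReal) (φ φ' : ℝ → Conf d N) : EReal :=
  if IntegrableOn (hypIntegrand m a x φ φ') (timeSet 1 T) ∧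
      (∀ᵐ t ∂volume.restrict (timeSet 1 T), ¬ collision (hypCurve a x φ t))
  then ((∫ t in timeSet 1 T, hypIntegrand m a x φ φ' t : ℝ) : EReal)
  else (⊤ : EReal)

/-- The infimum of the hyperbolic renormalized action over `D₀^{1,2}(1,T)`. -/
def hypInf (m : Fin N → ℝ) (a x : Conf d N) (T : EReal) : EReal :=
  ⨅ (φ : ℝ → Conf d N) (φ' : ℝ → Conf d N) (_ : InD m 1 T φ φ'), hypAction m a x T φ φ'

/-- The renormalized value function `v(x)` in the hyperbolic case. -/
def hypValue (m : Fin N → ℝ) (a x : Conf d N) : ℝ :=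
  (hypInf m a x ⊤).toReal - minner m a x


/-- The zero-barycenter configuration space `X`, as a set. -/
def setX (m : Fin N → ℝ) : Set (Conf d N) := {x | inX m x}

/-- `p ∈ D⁻v(x)` : the Fréchet subdifferential of `v` at `x`, computed within `X` and with
respect to the mass inner product; the condition states
`liminf_{y → x} (v(y) − v(x) − ⟨p, y − x⟩_M)/‖y − x‖_M ≥ 0`. -/
def InSubdiff (m : Fin N → ℝ) (v : Conf d N → ℝ) (x p : Conf d N) : Prop :=
  ∀ ε > (0:ℝ), ∀ᶠ y in nhdsWithin x (setX m \ {x}),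
    -(ε * mnorm m (y - x)) ≤ v y - v x - minner m p (y - x)

/-- `p ∈ D⁺v(x)` : the Fréchet superdifferential of `v` at `x`, computed within `X` and with
respect to the mass inner product; the condition states
`limsup_{y → x} (v(y) − v(x) − ⟨p, y − x⟩_M)/‖y − x‖_M ≤ 0`. -/
def InSuperdiff (m : Fin N → ℝ) (v : Conf d N → ℝ) (x p : Conf d N) : Prop :=
  ∀ ε > (0:ℝ), ∀ᶠ y in nhdsWithin x (setX m \ {x}),
    v y - v x - minner m p (y - x) ≤ ε * mnorm m (y - x)

/-- The Euclidean model of the configuration space with the mass inner product. -/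
abbrev MassSpace (d N : ℕ) := PiLp 2 (fun _ : Fin N => EuclideanSpace ℝ (Fin d))

/-- The rescaling `r_i ↦ √m_i r_i`, an isometry for the mass norm. -/
def massEquiv (m : Fin N → ℝ) (hm : ∀ i, 0 < m i) : Conf d N ≃L[ℝ] MassSpace d N :=
  (ContinuousLinearEquiv.piCongrRight fun i => ContinuousLinearEquiv.smulLeft
    (Units.mk0 (√(m i)) (Real.sqrt_pos.2 (hm i)).ne')).trans
      (PiLp.continuousLinearEquiv 2 ℝ (fun _ : Fin N => EuclideanSpace ℝ (Fin d))).symm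

lemma massEquiv_apply (m : Fin N → ℝ) (hm : ∀ i, 0 < m i) (x : Conf d N) (i : Fin N) :
    massEquiv m hm x i = √(m i) • x i := rfl

lemma inner_massEquiv (m : Fin N → ℝ) (hm : ∀ i, 0 < m i) (x y : Conf d N) :
    ⟪massEquiv m hm x, massEquiv m hm y⟫ = minner m x y := by
  rw [PiLp.inner_apply, minner]
  refine Finset.sum_congr rfl fun i _ => ?_
  rw [massEquiv_apply, massEquiv_apply, real_inner_smul_left, real_inner_smul_right, ← mul_assoc,
    Real.mul_self_sqrt (hm i).le]

lemma norm_massEquiv (m : Fin N → ℝ) (hm : ∀ i, 0 < m i) (x : Conf d N) :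
    ‖massEquiv m hm x‖ = mnorm m x := by
  rw [mnorm, ← inner_massEquiv m hm, real_inner_self_eq_norm_sq, Real.sqrt_sq (norm_nonneg _)]

lemma mnorm_nonneg (m : Fin N → ℝ) (x : Conf d N) : 0 ≤ mnorm m x := Real.sqrt_nonneg _

lemma exists_norm_le_mnorm (m : Fin N → ℝ) (hm : ∀ i, 0 < m i) :
    ∃ C > 0, ∀ x : Conf d N, ‖x‖ ≤ C * mnorm m x := by
  obtain ⟨C, hC, h⟩ := (massEquiv (d := d) m hm).symm.toContinuousLinearMap.bound
  refine ⟨C, hC, fun x => ?_⟩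
  simpa [norm_massEquiv] using h (massEquiv m hm x)

lemma exists_mnorm_le_norm (m : Fin N → ℝ) (hm : ∀ i, 0 < m i) :
    ∃ C > 0, ∀ x : Conf d N, mnorm m x ≤ C * ‖x‖ := by
  obtain ⟨C, hC, h⟩ := (massEquiv (d := d) m hm).toContinuousLinearMap.bound
  refine ⟨C, hC, fun x => ?_⟩
  simpa [norm_massEquiv] using h x

lemma mnorm_add_le (m : Fin N → ℝ) (hm : ∀ i, 0 < m i) (x y : Conf d N) :
    mnorm m (x + y) ≤ mnorm m x + mnorm m y := by
  simpa only [← norm_massEquiv m hm, map_add] using norm_add_le _ _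

lemma mnorm_sub_rev (m : Fin N → ℝ) (hm : ∀ i, 0 < m i) (x y : Conf d N) :
    mnorm m (x - y) = mnorm m (y - x) := by
  simpa only [← norm_massEquiv m hm, map_sub] using norm_sub_rev _ _

lemma mnorm_smul (m : Fin N → ℝ) (hm : ∀ i, 0 < m i) (c : ℝ) (x : Conf d N) :
    mnorm m (c • x) = |c| * mnorm m x := by
  rw [← norm_massEquiv m hm, ← norm_massEquiv m hm, map_smul, norm_smul, Real.norm_eq_abs]

lemma abs_minner_le (m : Fin N → ℝ) (hm : ∀ i, 0 < m i) (x y : Conf d N) :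
    |minner m x y| ≤ mnorm m x * mnorm m y := by
  simpa only [← norm_massEquiv m hm, ← inner_massEquiv m hm] using abs_real_inner_le_norm _ _

lemma minner_add_left (m : Fin N → ℝ) (x y z : Conf d N) :
    minner m (x + y) z = minner m x z + minner m y z := by
  simp [minner, inner_add_left, mul_add, Finset.sum_add_distrib]

lemma minner_sub_left (m : Fin N → ℝ) (x y z : Conf d N) :
    minner m (x - y) z = minner m x z - minner m y z := by
  simp [minner, inner_sub_left, mul_sub, Finset.sum_sub_distrib]

lemma minner_sub_right (m : Fin N → ℝ) (x y z : Conf d N) :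
    minner m x (y - z) = minner m x y - minner m x z := by
  simp [minner, inner_sub_right, mul_sub, Finset.sum_sub_distrib]

lemma minner_smul_left (m : Fin N → ℝ) (c : ℝ) (x y : Conf d N) :
    minner m (c • x) y = c * minner m x y := by
  simp [minner, real_inner_smul_left, Finset.mul_sum, mul_left_comm]

lemma mnorm_add_smul_sq (m : Fin N → ℝ) (hm : ∀ i, 0 < m i) (c : ℝ) (x y : Conf d N) :
    mnorm m (x + c • y) ^ 2 = mnorm m x ^ 2 + 2 * c * minner m x y + c ^ 2 * mnorm m y ^ 2 := by
  simp only [← norm_massEquiv m hm, ← inner_massEquiv m hm, map_add, map_smul]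
  rw [norm_add_sq_real, norm_smul, real_inner_smul_right, mul_pow, Real.norm_eq_abs, sq_abs]
  ring

lemma timeSet_top (t0 : ℝ) : timeSet t0 ⊤ = Ioi t0 := by
  ext t; simp [timeSet, EReal.coe_lt_top]

lemma inX_add {m : Fin N → ℝ} {x y : Conf d N} (hx : inX m x) (hy : inX m y) :
    inX m (x + y) := by
  unfold inX at *; simp [smul_add, Finset.sum_add_distrib, hx, hy]

lemma inX_smul {m : Fin N → ℝ} (c : ℝ) {x : Conf d N} (hx : inX m x) : inX m (c • x) := by
  unfold inX at *
  simp only [Pi.smul_apply, smul_comm _ c, ← Finset.smul_sum, hx, smul_zero]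

lemma inX_sub {m : Fin N → ℝ} {x y : Conf d N} (hx : inX m x) (hy : inX m y) :
    inX m (x - y) := by
  unfold inX at *; simp [smul_sub, Finset.sum_sub_distrib, hx, hy]

lemma isClosed_setX (m : Fin N → ℝ) : IsClosed (setX m : Set (Conf d N)) :=
  isClosed_eq (by fun_prop) continuous_const

/-! ### The potential -/

lemma U_contDiffAt (m : Fin N → ℝ) {x : Conf d N} (hx : ¬ collision x) :
    ContDiffAt ℝ 1 (U m) x := by
  unfold U
  refine ContDiffAt.sum fun i _ => ContDiffAt.sum fun j _ => ?_
  split_ifs with hij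
  · have hne : x i - x j ≠ 0 := fun h => hx ⟨i, j, hij.ne, sub_eq_zero.1 h⟩
    have h1 : ContDiffAt ℝ 1 (fun x : Conf d N => x i - x j) x := by fun_prop
    exact contDiffAt_const.div (h1.norm ℝ hne) (norm_ne_zero_iff.2 hne)
  · exact contDiffAt_const

/-- Near a collision-free configuration there are no collisions and `U` is Lipschitz for the
mass norm. -/
lemma U_locally_lipschitz (m : Fin N → ℝ) (hm : ∀ i, 0 < m i) {x : Conf d N}
    (hx : ¬ collision x) :
    ∃ r > 0, ∃ C > 0, ∀ y z : Conf d N, mnorm m (y - x) < r → mnorm m (z - x) < r →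
      ¬ collision y ∧ |U m y - U m z| ≤ C * mnorm m (y - z) := by
  obtain ⟨K, s, hs, hK⟩ := (U_contDiffAt m hx).exists_lipschitzOnWith
  have hcol : ∀ᶠ y in 𝓝 x, ¬ collision y := by
    have : IsOpen {y : Conf d N | ¬ collision y} := by
      have h : {y : Conf d N | ¬ collision y}
          = ⋂ i, ⋂ j, {y : Conf d N | i ≠ j → y i ≠ y j} := by
        ext y; simp [collision]
      rw [h]
      refine isOpen_iInter_of_finite fun i => isOpen_iInter_of_finite fun j => ?_
      by_cases hij : i = j
      · simp [hij]
      · simpa [hij] using isOpen_ne_fun (continuous_apply i) (continuous_apply j)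
    exact this.mem_nhds hx
  obtain ⟨ρ, hρ, hball⟩ := Metric.mem_nhds_iff.1 (inter_mem hs hcol)
  obtain ⟨c, hc, hle⟩ := exists_norm_le_mnorm (d := d) m hm
  have hmem : ∀ y : Conf d N, mnorm m (y - x) < ρ / c → y ∈ Metric.ball x ρ := fun y hy => by
    rw [mem_ball_iff_norm]
    calc _ ≤ c * mnorm m (y - x) := hle _
      _ < ρ := by rwa [lt_div_iff₀' hc] at hy
  refine ⟨ρ / c, by positivity, K * c + 1, by positivity, fun y z hy hz => ?_⟩
  have hy' := hball (hmem y hy)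
  have hz' := hball (hmem z hz)
  refine ⟨hy'.2, ?_⟩
  have h := hK.dist_le_mul _ hy'.1 _ hz'.1
  rw [Real.dist_eq, dist_eq_norm] at h
  have := hle (y - z)
  have := mul_le_mul_of_nonneg_left this K.coe_nonneg
  nlinarith [mnorm_nonneg m (y - z)]

/-- Lower bound for the renormalized potential along a collision-free configuration. -/
lemma exists_potential_lower_bound (m : Fin N → ℝ) (hm : ∀ i, 0 < m i) {a : Conf d N}
    (ha : ¬ collision a) (b : ℝ) :
    ∃ C > 0, ∀ u y : Conf d N, mnorm m (y - a) ≤ b → ∀ t ≥ (1:ℝ),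
      ¬ collision (u + t • a + y - a) →
        -(C * (1 + mnorm m u) / t ^ 2) ≤ U m (u + t • a + y - a) - U m (t • a) := by
  obtain ⟨c, hc, hle⟩ := exists_norm_le_mnorm (d := d) m hm
  set B := |b| + 1
  have hB : 1 ≤ B := by simp [B]
  let k : Fin N → Fin N → ℝ := fun i j =>
    if i < j then m i * m j * (2 * c * B) / ‖a i - a j‖ ^ 2 else 0
  have hk : ∀ i j, 0 ≤ k i j := fun i j => by
    have := (hm i).le; have := (hm j).le
    simp only [k]; split_ifs <;> positivity
  refine ⟨∑ i, ∑ j, k i j + 1, add_pos_of_nonneg_of_pos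
    (Finset.sum_nonneg fun i _ => Finset.sum_nonneg fun j _ => hk i j) one_pos,
    fun u y hy t ht hcol => ?_⟩
  have hu := mnorm_nonneg m u
  have hya := mnorm_nonneg m (y - a)
  have key : ∀ i j, -(k i j * (1 + mnorm m u) / t ^ 2) ≤
      (if i < j then m i * m j / ‖(u + t • a + y - a) i - (u + t • a + y - a) j‖ else 0) -
        (if i < j then m i * m j / ‖(t • a) i - (t • a) j‖ else 0) := by
    intro i j
    simp only [k]
    split_ifs with hij
    · have h0 : 0 < ‖(u + t • a + y - a) i - (u + t • a + y - a) j‖ :=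
        norm_pos_iff.2 fun h => hcol ⟨i, j, hij.ne, sub_eq_zero.1 h⟩
      have h1 : 0 < ‖a i - a j‖ := norm_pos_iff.2 fun h => ha ⟨i, j, hij.ne, sub_eq_zero.1 h⟩
      have ht0 : 0 < t := by linarith
      have h2 : ‖(t • a) i - (t • a) j‖ = t * ‖a i - a j‖ := by
        rw [Pi.smul_apply, Pi.smul_apply, ← smul_sub, norm_smul, Real.norm_of_nonneg ht0.le]
      set q := u + (y - a)
      have h3 : (u + t • a + y - a) i - (u + t • a + y - a) j
          = t • (a i - a j) + (q i - q j) := by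
        simp [q, smul_sub]; abel
      have hq : ‖q i - q j‖ ≤ 2 * c * B * (1 + mnorm m u) := by
        have e1 : ‖q i - q j‖ ≤ ‖q‖ + ‖q‖ :=
          (norm_sub_le _ _).trans (add_le_add (norm_le_pi_norm q i) (norm_le_pi_norm q j))
        have e2 : ‖q‖ ≤ c * (mnorm m u + mnorm m (y - a)) :=
          (hle q).trans (mul_le_mul_of_nonneg_left (mnorm_add_le m hm _ _) hc.le)
        have e3 : mnorm m u + mnorm m (y - a) ≤ B * (1 + mnorm m u) := by
          have := le_abs_self b
          simp only [B] at *
          nlinarith [mul_nonneg (abs_nonneg b) hu]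
        nlinarith
      have h4 : ‖(u + t • a + y - a) i - (u + t • a + y - a) j‖
          ≤ t * ‖a i - a j‖ + ‖q i - q j‖ := by
        rw [h3]
        refine (norm_add_le _ _).trans ?_
        rw [norm_smul, Real.norm_of_nonneg ht0.le]
      rw [h2]
      set R := ‖q i - q j‖
      have hR : 0 ≤ R := norm_nonneg _
      set α := ‖a i - a j‖
      have h5 : 1 / (t * α + R) - 1 / (t * α) ≥ -(R / (t ^ 2 * α ^ 2)) := by
        have : 1 / (t * α + R) - 1 / (t * α) = -(R / ((t * α) * (t * α + R))) := by
          field_simp; ring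
        rw [this]
        have : R / (t * α * (t * α + R)) ≤ R / (t ^ 2 * α ^ 2) := by
          apply div_le_div_of_nonneg_left hR (by positivity)
          have : 0 ≤ t * α * R := by positivity
          nlinarith
        linarith
      have h6 := one_div_le_one_div_of_le h0 h4
      have h7 : R / (t ^ 2 * α ^ 2) ≤ 2 * c * B * (1 + mnorm m u) / (t ^ 2 * α ^ 2) := by gcongr
      have hmm : 0 < m i * m j := mul_pos (hm i) (hm j)
      have h8 : -(2 * c * B * (1 + mnorm m u) / (t ^ 2 * α ^ 2)) ≤
          1 / ‖(u + t • a + y - a) i - (u + t • a + y - a) j‖ - 1 / (t * α) := by linarith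
      calc _ = m i * m j * -(2 * c * B * (1 + mnorm m u) / (t ^ 2 * α ^ 2)) := by
            field_simp
        _ ≤ _ := mul_le_mul_of_nonneg_left h8 hmm.le
        _ = _ := by ring
    · simp
  have hsum : -(((∑ i, ∑ j, k i j)) * (1 + mnorm m u) / t ^ 2) ≤
      U m (u + t • a + y - a) - U m (t • a) := by
    unfold U
    rw [← Finset.sum_sub_distrib, Finset.sum_mul, Finset.sum_div, ← Finset.sum_neg_distrib]
    refine Finset.sum_le_sum fun i _ => ?_
    rw [← Finset.sum_sub_distrib, Finset.sum_mul, Finset.sum_div, ← Finset.sum_neg_distrib]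
    exact Finset.sum_le_sum fun j _ => key i j
  refine le_trans ?_ hsum
  gcongr
  linarith

/-! ### Curves of finite energy -/

/-- The energy `∫_1^∞ ‖φ̇‖_M²`. -/
def energy (m : Fin N → ℝ) (φ' : ℝ → Conf d N) : ℝ := ∫ t in Ioi (1:ℝ), mnorm m (φ' t) ^ 2

lemma energy_nonneg (m : Fin N → ℝ) (φ' : ℝ → Conf d N) : 0 ≤ energy m φ' :=
  integral_nonneg fun _ => sq_nonneg _

/-- The renormalized action as a real integral. -/
def realAction (m : Fin N → ℝ) (a x : Conf d N) (φ φ' : ℝ → Conf d N) : ℝ :=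
  ∫ t in Ioi (1:ℝ), hypIntegrand m a x φ φ' t

lemma InD.integrable_sq {m : Fin N → ℝ} {φ φ' : ℝ → Conf d N} (h : InD m 1 ⊤ φ φ') :
    IntegrableOn (fun t => mnorm m (φ' t) ^ 2) (Ioi 1) := by
  simpa [timeSet_top] using h.2.2.2.2

lemma InD.integrableOn {m : Fin N → ℝ} {φ φ' : ℝ → Conf d N} (h : InD m 1 ⊤ φ φ') (t : ℝ) :
    IntegrableOn φ' (Ioc 1 t) := by
  rcases le_or_gt 1 t with ht | ht
  · exact h.2.2.2.1 t ht (EReal.coe_lt_top t)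
  · simp [Ioc_eq_empty_of_le ht.le]

lemma InD.eq_integral {m : Fin N → ℝ} {φ φ' : ℝ → Conf d N} (h : InD m 1 ⊤ φ φ') {t : ℝ}
    (ht : 1 ≤ t) : φ t = ∫ s in Ioc 1 t, φ' s := h.2.2.1 t ht (EReal.coe_lt_top t)

lemma InD.inX {m : Fin N → ℝ} {φ φ' : ℝ → Conf d N} (h : InD m 1 ⊤ φ φ') {t : ℝ}
    (ht : 1 ≤ t) : inX m (φ t) := h.2.1 t ht (EReal.coe_lt_top t)

lemma InD.aestronglyMeasurable {m : Fin N → ℝ} {φ φ' : ℝ → Conf d N} (h : InD m 1 ⊤ φ φ') :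
    AEStronglyMeasurable φ' (volume.restrict (Ioi 1)) := by
  have hU : (Ioi (1:ℝ)) = ⋃ n : ℕ, Ioc 1 (n : ℝ) := by
    ext t
    simp only [mem_Ioi, mem_iUnion, mem_Ioc, exists_and_left]
    exact ⟨fun ht => ⟨ht, exists_nat_ge t⟩, fun ht => ht.1⟩
  rw [hU]
  exact AEStronglyMeasurable.iUnion fun n => (h.integrableOn n).aestronglyMeasurable

lemma InD.continuousOn {m : Fin N → ℝ} {φ φ' : ℝ → Conf d N} (h : InD m 1 ⊤ φ φ') :
    ContinuousOn φ (Ici 1) := by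
  intro t ht
  have h1 : ContinuousOn (fun x => ∫ s in Ioc 1 x, φ' s) (Icc 1 (t + 1)) :=
    intervalIntegral.continuousOn_primitive
      ((integrableOn_Icc_iff_integrableOn_Ioc).2 (h.integrableOn (t + 1)))
  have h2 : ContinuousWithinAt φ (Icc 1 (t + 1)) t :=
    (h1.congr fun s hs => h.eq_integral hs.1) t ⟨ht, by linarith⟩
  refine h2.mono_of_mem_nhdsWithin ?_
  rw [← Ici_inter_Iic]
  exact inter_mem self_mem_nhdsWithin
    (mem_nhdsWithin_of_mem_nhds (Iic_mem_nhds (by linarith)))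

lemma InD.memLp {m : Fin N → ℝ} (hm : ∀ i, 0 < m i) {φ φ' : ℝ → Conf d N}
    (h : InD m 1 ⊤ φ φ') :
    MemLp (fun t => massEquiv m hm (φ' t)) 2 (volume.restrict (Ioi 1)) := by
  have hmeas : AEStronglyMeasurable (fun t => massEquiv m hm (φ' t)) (volume.restrict (Ioi 1)) :=
    (massEquiv m hm).continuous.comp_aestronglyMeasurable h.aestronglyMeasurable
  rw [memLp_two_iff_integrable_sq_norm hmeas]
  simpa only [norm_massEquiv, IntegrableOn] using h.integrable_sq

lemma InD.mnorm_sq_le {m : Fin N → ℝ} (hm : ∀ i, 0 < m i) {φ φ' : ℝ → Conf d N}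
    (h : InD m 1 ⊤ φ φ') {t : ℝ} (ht : 1 ≤ t) :
    mnorm m (φ t) ^ 2 ≤ (t - 1) * energy m φ' := by
  rcases ht.eq_or_lt with rfl | ht'
  · simp [h.1, mnorm, minner]
  have hsub : Ioc 1 t ⊆ Ioi (1:ℝ) := fun s hs => hs.1
  have hint := h.integrableOn t
  have hsq : IntegrableOn (fun s => mnorm m (φ' s) ^ 2) (Ioc 1 t) :=
    h.integrable_sq.mono_set hsub
  have hn : IntegrableOn (fun s => mnorm m (φ' s)) (Ioc 1 t) := by
    simpa only [norm_massEquiv, IntegrableOn, ContinuousLinearEquiv.coe_coe] using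
      ((massEquiv m hm).toContinuousLinearMap.integrable_comp hint).norm
  set I := ∫ s in Ioc 1 t, mnorm m (φ' s)
  have h1 : mnorm m (φ t) ≤ I := by
    rw [← norm_massEquiv m hm, h.eq_integral ht]
    have := (massEquiv m hm).toContinuousLinearMap.integral_comp_comm hint
    simp only [ContinuousLinearEquiv.coe_coe] at this
    rw [← this]
    refine (norm_integral_le_integral_norm _).trans_eq ?_
    simp only [norm_massEquiv, I]
  have h2 : ∫ s in Ioc 1 t, mnorm m (φ' s) ^ 2 ≤ energy m φ' :=
    setIntegral_mono_set h.integrable_sq (ae_of_all _ fun _ => sq_nonneg _)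
      hsub.eventuallyLE
  set c := I / (t - 1)
  have ht1 : 0 < t - 1 := by linarith
  have h3 : 0 ≤ ∫ s in Ioc 1 t, (mnorm m (φ' s) - c) ^ 2 := integral_nonneg fun _ => sq_nonneg _
  have h4 : ∫ s in Ioc 1 t, (mnorm m (φ' s) - c) ^ 2 =
      (∫ s in Ioc 1 t, mnorm m (φ' s) ^ 2) - 2 * c * I + c ^ 2 * (t - 1) := by
    have e : ∀ s, (mnorm m (φ' s) - c) ^ 2 =
        mnorm m (φ' s) ^ 2 - 2 * c * mnorm m (φ' s) + c ^ 2 := fun s => by ring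
    simp only [e]
    have e1 : IntegrableOn (fun s => mnorm m (φ' s) ^ 2 - 2 * c * mnorm m (φ' s)) (Ioc 1 t) :=
      hsq.sub (hn.const_mul _)
    rw [integral_add e1 (integrable_const _), integral_sub hsq (hn.const_mul _),
      integral_const_mul]
    simp [ht, I, mul_comm]
  have h5 : c * (t - 1) = I := div_mul_cancel₀ _ ht1.ne'
  have h6 : I ^ 2 ≤ (t - 1) * energy m φ' := by
    have : 0 ≤ (t - 1) * (energy m φ' - 2 * c * I + c ^ 2 * (t - 1)) :=
      mul_nonneg ht1.le (by linarith)
    rw [← h5] at this ⊢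
    nlinarith
  exact (pow_le_pow_left₀ (mnorm_nonneg _ _) h1 2).trans h6

lemma hypAction_eq_realAction {m : Fin N → ℝ} {a x : Conf d N} {φ φ' : ℝ → Conf d N}
    (h : hypAction m a x ⊤ φ φ' ≠ ⊤) :
    IntegrableOn (hypIntegrand m a x φ φ') (Ioi 1) ∧
      (∀ᵐ t ∂volume.restrict (Ioi 1), ¬ collision (hypCurve a x φ t)) ∧
      hypAction m a x ⊤ φ φ' = realAction m a x φ φ' := by
  unfold hypAction at *
  rw [timeSet_top] at *
  split_ifs at * with hc
  · exact ⟨hc.1, hc.2, rfl⟩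
  · exact absurd rfl h

lemma hypAction_of_integrable {m : Fin N → ℝ} {a x : Conf d N} {φ φ' : ℝ → Conf d N}
    (h1 : IntegrableOn (hypIntegrand m a x φ φ') (Ioi 1))
    (h2 : ∀ᵐ t ∂volume.restrict (Ioi 1), ¬ collision (hypCurve a x φ t)) :
    hypAction m a x ⊤ φ φ' = realAction m a x φ φ' := by
  unfold hypAction
  rw [timeSet_top, if_pos ⟨h1, h2⟩]
  rfl

lemma integrableOn_rpow_three_halves : IntegrableOn (fun t : ℝ => t ^ (-(3/2) : ℝ)) (Ioi 1) :=
  integrableOn_Ioi_rpow_of_lt (by norm_num) one_pos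

lemma one_add_sqrt_div_sq_le {K t s : ℝ} (hK : 0 ≤ K) (ht : 1 ≤ t)
    (h : s ^ 2 ≤ (t - 1) * K) : (1 + s) / t ^ 2 ≤ (1 + √K) * t ^ (-(3/2) : ℝ) := by
  have ht0 : 0 < t := by linarith
  have h1 : t ^ (-(3/2) : ℝ) = √t / t ^ 2 := by
    rw [Real.sqrt_eq_rpow, ← Real.rpow_natCast t 2, ← Real.rpow_sub ht0]
    norm_num
  rw [h1, ← mul_div_assoc]
  gcongr
  have h2 : s ≤ √K * √t := by
    rw [← Real.sqrt_mul hK]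
    apply Real.le_sqrt_of_sq_le
    nlinarith
  have h3 : 1 ≤ √t := Real.one_le_sqrt.2 ht
  linarith

/-- Pointwise lower bound of the renormalized potential along curves of bounded energy. -/
lemma exists_potential_lower_bound_curve (m : Fin N → ℝ) (hm : ∀ i, 0 < m i) {a : Conf d N}
    (ha : ¬ collision a) (b : ℝ) :
    ∃ C > 0, ∀ y : Conf d N, mnorm m (y - a) ≤ b → ∀ φ φ' : ℝ → Conf d N, InD m 1 ⊤ φ φ' →
      ∀ K, energy m φ' ≤ K → ∀ t ≥ (1:ℝ), ¬ collision (hypCurve a y φ t) →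
        -(C * (1 + √K) * t ^ (-(3/2) : ℝ)) ≤ U m (hypCurve a y φ t) - U m (t • a) := by
  obtain ⟨C, hC, h⟩ := exists_potential_lower_bound m hm ha b
  refine ⟨C, hC, fun y hy φ φ' hφ K hK t ht hcol => le_trans ?_ (h (φ t) y hy t ht hcol)⟩
  rw [neg_le_neg_iff, mul_div_assoc, mul_assoc]
  refine mul_le_mul_of_nonneg_left (one_add_sqrt_div_sq_le ((energy_nonneg _ _).trans hK) ht
    ((hφ.mnorm_sq_le hm ht).trans ?_)) hC.le
  exact mul_le_mul_of_nonneg_left hK (by linarith)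

lemma integrable_potential {m : Fin N → ℝ} {a x : Conf d N} {φ φ' : ℝ → Conf d N}
    (hφ : InD m 1 ⊤ φ φ') (h : hypAction m a x ⊤ φ φ' ≠ ⊤) :
    IntegrableOn (fun t => U m (hypCurve a x φ t) - U m (t • a)) (Ioi 1) ∧
      realAction m a x φ φ' =
        energy m φ' / 2 + ∫ t in Ioi (1:ℝ), (U m (hypCurve a x φ t) - U m (t • a)) := by
  obtain ⟨h1, -, -⟩ := hypAction_eq_realAction h
  have h2 := hφ.integrable_sq.div_const 2
  have h3 : IntegrableOn (fun t => U m (hypCurve a x φ t) - U m (t • a)) (Ioi 1) := by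
    refine (h1.sub h2).congr (ae_of_all _ fun t => ?_)
    simp only [hypIntegrand, Pi.sub_apply]
    ring
  refine ⟨h3, ?_⟩
  rw [energy, ← integral_div, ← integral_add h2 h3]
  refine integral_congr_ae (ae_of_all _ fun t => ?_)
  simp only [hypIntegrand]
  ring

/-- Coercivity of the renormalized action, locally uniformly in the initial configuration. -/
lemma exists_coercive (m : Fin N → ℝ) (hm : ∀ i, 0 < m i) {a : Conf d N}
    (ha : ¬ collision a) (b : ℝ) :
    ∃ C > 0, ∀ y : Conf d N, mnorm m (y - a) ≤ b → ∀ φ φ' : ℝ → Conf d N, InD m 1 ⊤ φ φ' →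
      hypAction m a y ⊤ φ φ' ≠ ⊤ → energy m φ' ≤ 4 * realAction m a y φ φ' + C := by
  obtain ⟨C, hC, h⟩ := exists_potential_lower_bound_curve m hm ha b
  set G := ∫ t in Ioi (1:ℝ), t ^ (-(3/2) : ℝ)
  have hG : 0 ≤ G := setIntegral_nonneg measurableSet_Ioi fun t ht =>
    Real.rpow_nonneg (zero_le_one.trans (le_of_lt ht)) _
  refine ⟨4 * (C * G) + 4 * (C * G) ^ 2 + 1, by positivity, fun y hy φ φ' hφ htop => ?_⟩
  obtain ⟨h1, h2⟩ := integrable_potential hφ htop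
  obtain ⟨-, hcol, -⟩ := hypAction_eq_realAction htop
  set K := energy m φ'
  have hK : 0 ≤ K := energy_nonneg _ _
  have h3 : -(C * (1 + √K) * G) ≤ ∫ t in Ioi (1:ℝ), (U m (hypCurve a y φ t) - U m (t • a)) := by
    rw [← integral_const_mul, ← integral_neg]
    refine integral_mono_ae (integrableOn_rpow_three_halves.const_mul _).neg h1 ?_
    filter_upwards [hcol, ae_restrict_mem measurableSet_Ioi] with t ht ht1
    exact h y hy φ φ' hφ K le_rfl t (le_of_lt ht1) ht
  have h4 := Real.sq_sqrt hK
  nlinarith [sq_nonneg (√K - 2 * (C * G))]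

/-! ### Shifting the initial configuration -/

lemma integral_indicator_Ioc {δ t : ℝ} (hδ : 0 < δ) (ht : 1 ≤ t) :
    ∫ s in Ioc 1 t, (Ioc 1 (1 + δ)).indicator (fun _ => δ⁻¹) s = min ((t - 1) / δ) 1 := by
  rw [setIntegral_indicator measurableSet_Ioc, Ioc_inter_Ioc, setIntegral_const]
  have h1 : 1 ≤ min t (1 + δ) := le_min ht (by linarith)
  rw [max_self, Measure.real, Real.volume_Ioc, ENNReal.toReal_ofReal (by linarith), smul_eq_mul,
    ← div_eq_mul_inv]
  rcases le_total t (1 + δ) with h | h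
  · rw [min_eq_left h, min_eq_left]
    rw [div_le_one hδ]; linarith
  · rw [min_eq_right h, min_eq_right]
    · field_simp; ring
    · rw [le_div_iff₀ hδ]; linarith

lemma integrable_minner {m : Fin N → ℝ} (hm : ∀ i, 0 < m i) {φ' : ℝ → Conf d N} {s : Set ℝ}
    (h : IntegrableOn φ' s) (z : Conf d N) :
    IntegrableOn (fun t => minner m (φ' t) z) s ∧
      ∫ t in s, minner m (φ' t) z = minner m (∫ t in s, φ' t) z := by
  let L : Conf d N →L[ℝ] ℝ :=
    (innerSL ℝ (massEquiv m hm z)).comp (massEquiv m hm).toContinuousLinearMap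
  have hL : ∀ u, L u = minner m u z := fun u => by
    simp only [L, ContinuousLinearMap.comp_apply, ContinuousLinearEquiv.coe_coe,
      innerSL_apply_apply]
    rw [real_inner_comm, inner_massEquiv]
  constructor
  · simpa only [hL, IntegrableOn] using L.integrable_comp h
  · simpa only [hL] using L.integral_comp_comm h

/-- The linear cutoff of the initial displacement `z` over the time interval `[1, 1 + δ]`. -/
def shiftCurve (δ : ℝ) (z : Conf d N) (φ : ℝ → Conf d N) (t : ℝ) : Conf d N :=
  φ t + min ((t - 1) / δ) 1 • z

/-- The derivative of `shiftCurve`. -/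
def shiftDeriv (δ : ℝ) (z : Conf d N) (φ' : ℝ → Conf d N) (t : ℝ) : Conf d N :=
  φ' t + (Ioc 1 (1 + δ)).indicator (fun _ => δ⁻¹) t • z

lemma integrable_indicator_Ioc (δ : ℝ) (z : Conf d N) (μ : Measure ℝ) [IsLocallyFiniteMeasure μ] :
    Integrable (fun t => (Ioc 1 (1 + δ)).indicator (fun _ => δ⁻¹) t • z) μ := by
  refine Integrable.smul_const ?_ z
  rw [integrable_indicator_iff measurableSet_Ioc]
  exact integrableOn_const (measure_Ioc_lt_top.ne)

lemma mnorm_shiftDeriv_sq {m : Fin N → ℝ} (hm : ∀ i, 0 < m i) (δ : ℝ) (z : Conf d N)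
    (φ' : ℝ → Conf d N) (t : ℝ) :
    mnorm m (shiftDeriv δ z φ' t) ^ 2 = mnorm m (φ' t) ^ 2 + (Ioc 1 (1 + δ)).indicator
      (fun s => 2 * δ⁻¹ * minner m (φ' s) z + δ⁻¹ ^ 2 * mnorm m z ^ 2) t := by
  rw [shiftDeriv, mnorm_add_smul_sq m hm]
  by_cases ht : t ∈ Ioc 1 (1 + δ)
  · simp only [indicator_of_mem ht]; ring
  · simp only [indicator_of_notMem ht]; ring

lemma InD.shift {m : Fin N → ℝ} (hm : ∀ i, 0 < m i) {φ φ' : ℝ → Conf d N}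
    (h : InD m 1 ⊤ φ φ') {δ : ℝ} (hδ : 0 < δ) {z : Conf d N} (hz : NBodyHJ.inX m z) :
    InD m 1 ⊤ (shiftCurve δ z φ) (shiftDeriv δ z φ') := by
  refine ⟨by simp [shiftCurve, h.1], fun t ht _ => inX_add (h.inX ht) (inX_smul _ hz),
    fun t ht _ => ?_, fun t ht _ => (h.integrableOn t).add (integrable_indicator_Ioc δ z _), ?_⟩
  · unfold shiftCurve shiftDeriv
    rw [integral_add (h.integrableOn t) (integrable_indicator_Ioc δ z _), ← h.eq_integral ht,
      integral_smul_const, integral_indicator_Ioc hδ ht]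
  · rw [timeSet_top]
    simp only [mnorm_shiftDeriv_sq hm]
    refine h.integrable_sq.add (Integrable.integrableOn ?_)
    rw [integrable_indicator_iff measurableSet_Ioc]
    have := (integrable_minner hm (h.integrableOn (1 + δ)) z).1
    exact (this.const_mul _).add (integrable_const _)

/-- Moving the initial configuration from `y` to `y'` by a linear cutoff over `[1, 1 + δ]`
changes the action in a controlled way. -/
lemma exists_shift_action_le (m : Fin N → ℝ) (hm : ∀ i, 0 < m i) (a : Conf d N)
    {x : Conf d N} (hx : ¬ collision x) {R : ℝ} (hR : 0 ≤ R) :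
    ∃ r > 0, ∃ δ₀ > 0, ∃ C > 0, ∀ y y' : Conf d N, inX m y → inX m y' →
      mnorm m (y - x) < r → mnorm m (y' - x) < r → ∀ δ > 0, δ ≤ δ₀ →
      ∀ φ φ' : ℝ → Conf d N, InD m 1 ⊤ φ φ' → energy m φ' ≤ R →
      hypAction m a y ⊤ φ φ' ≠ ⊤ → ∃ ψ ψ' : ℝ → Conf d N, InD m 1 ⊤ ψ ψ' ∧
        ψ (1 + δ) = φ (1 + δ) + (y - y') ∧ hypAction m a y' ⊤ ψ ψ' ≠ ⊤ ∧
        realAction m a y' ψ ψ' ≤ realAction m a y φ φ' + minner m (φ (1 + δ)) (y - y') / δ +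
          mnorm m (y - y') ^ 2 / (2 * δ) + C * δ * mnorm m (y - y') := by
  obtain ⟨ρ, hρ, C, hC, hlip⟩ := U_locally_lipschitz m hm hx
  have hna := mnorm_nonneg m a
  refine ⟨ρ / 3, by positivity, min ((ρ / 3) ^ 2 / (R + 1)) (ρ / 3 / (mnorm m a + 1)),
    by positivity, C, hC, fun y y' hy hy' hyx hyx' δ hδ hδ₀ φ φ' hφ hE htop => ?_⟩
  obtain ⟨hint, hcol, -⟩ := hypAction_eq_realAction htop
  set z := y - y'
  have hzX : inX m z := inX_sub hy hy'
  set ψ := shiftCurve δ z φ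
  set ψ' := shiftDeriv δ z φ'
  have hψ : InD m 1 ⊤ ψ ψ' := hφ.shift hm hδ hzX
  have hδ1 : δ * (R + 1) ≤ (ρ / 3) ^ 2 :=
    (le_div_iff₀ (by positivity)).1 (hδ₀.trans (min_le_left _ _))
  have hδ2 : δ * (mnorm m a + 1) ≤ ρ / 3 :=
    (le_div_iff₀ (by positivity)).1 (hδ₀.trans (min_le_right _ _))
  set S := Ioc (1:ℝ) (1 + δ)
  have hbase : ∀ t ∈ Icc 1 (1 + δ), mnorm m (φ t + (t - 1) • a) ≤ 2 * (ρ / 3) := by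
    intro t ht
    refine (mnorm_add_le m hm _ _).trans ?_
    have h1 : mnorm m (φ t) ≤ ρ / 3 := by
      refine le_of_sq_le_sq ?_ (by positivity)
      refine (hφ.mnorm_sq_le hm ht.1).trans (le_trans ?_ hδ1)
      have := energy_nonneg m φ'
      have h1 : t - 1 ≤ δ := by linarith [ht.2]
      exact mul_le_mul h1 (by linarith) this hδ.le
    have h2 : mnorm m ((t - 1) • a) ≤ ρ / 3 := by
      rw [mnorm_smul m hm, abs_of_nonneg (by linarith [ht.1])]
      nlinarith [ht.2]
    linarith
  have hγ : ∀ t ∈ Icc 1 (1 + δ), mnorm m (hypCurve a y φ t - x) < ρ := by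
    intro t ht
    have e : hypCurve a y φ t - x = (φ t + (t - 1) • a) + (y - x) := by
      simp only [hypCurve, sub_smul, one_smul]; abel
    rw [e]
    have := mnorm_add_le m hm (φ t + (t - 1) • a) (y - x)
    linarith [hbase t ht]
  have hθ : ∀ t ∈ Icc 1 (1 + δ), min ((t - 1) / δ) 1 ∈ Icc (0:ℝ) 1 := fun t ht =>
    ⟨le_min (div_nonneg (by linarith [ht.1]) hδ.le) zero_le_one, min_le_right _ _⟩
  have hγ' : ∀ t ∈ Icc 1 (1 + δ), mnorm m (hypCurve a y' ψ t - x) < ρ := by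
    intro t ht
    have hθt := hθ t ht
    set θ := min ((t - 1) / δ) 1 with hθdef
    have e : hypCurve a y' ψ t - x =
        (φ t + (t - 1) • a) + (θ • (y - x) + (1 - θ) • (y' - x)) := by
      simp only [hypCurve, ψ, shiftCurve, ← hθdef, z]
      module
    rw [e]
    have h1 := mnorm_add_le m hm (φ t + (t - 1) • a) (θ • (y - x) + (1 - θ) • (y' - x))
    have h2 := mnorm_add_le m hm (θ • (y - x)) ((1 - θ) • (y' - x))
    rw [mnorm_smul m hm, mnorm_smul m hm, abs_of_nonneg hθt.1,
      abs_of_nonneg (by linarith [hθt.2])] at h2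
    have h3 : θ * mnorm m (y - x) + (1 - θ) * mnorm m (y' - x) < ρ / 3 := by
      rcases hθt.1.eq_or_lt with h0 | h0
      · rw [← h0]; linarith
      · nlinarith [hθt.2]
    linarith [hbase t ht]
  have hdiff : ∀ t ∈ Icc 1 (1 + δ), mnorm m (hypCurve a y' ψ t - hypCurve a y φ t) ≤
      mnorm m z := by
    intro t ht
    have hθt := hθ t ht
    set θ := min ((t - 1) / δ) 1 with hθdef
    have e : hypCurve a y' ψ t - hypCurve a y φ t = (θ - 1) • z := by
      simp only [hypCurve, ψ, shiftCurve, ← hθdef, z]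
      module
    rw [e, mnorm_smul m hm, abs_of_nonpos (by linarith [hθt.2])]
    nlinarith [hθt.1, mnorm_nonneg m z]
  have hlater : ∀ t, 1 + δ < t → hypCurve a y' ψ t = hypCurve a y φ t := by
    intro t ht
    have e : min ((t - 1) / δ) 1 = 1 := min_eq_right ((le_div_iff₀ hδ).2 (by linarith))
    simp only [hypCurve, ψ, shiftCurve, e, z]
    module
  have hUint : IntegrableOn (fun t => U m (hypCurve a y' ψ t) - U m (hypCurve a y φ t)) S := by
    have hsub : Icc 1 (1 + δ) ⊆ Ici (1:ℝ) := fun t ht => ht.1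
    have c1 : ContinuousOn (hypCurve a y φ) (Icc 1 (1 + δ)) := by
      have := hφ.continuousOn.mono hsub
      unfold hypCurve
      fun_prop
    have c2 : ContinuousOn (hypCurve a y' ψ) (Icc 1 (1 + δ)) := by
      have := hψ.continuousOn.mono hsub
      unfold hypCurve
      fun_prop
    have hc : ContinuousOn (fun t => U m (hypCurve a y' ψ t) - U m (hypCurve a y φ t))
        (Icc 1 (1 + δ)) := by
      intro t ht
      exact ((U_contDiffAt m
        (hlip _ _ (hγ' t ht) (hγ' t ht)).1).continuousAt.comp_continuousWithinAt
        (c2 t ht)).sub ((U_contDiffAt m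
          (hlip _ _ (hγ t ht) (hγ t ht)).1).continuousAt.comp_continuousWithinAt (c1 t ht))
    exact (hc.integrableOn_Icc).mono_set Ioc_subset_Icc_self
  obtain ⟨hmi, hmi'⟩ := integrable_minner hm (hφ.integrableOn (1 + δ)) z
  set D : ℝ → ℝ := fun t => δ⁻¹ * minner m (φ' t) z + δ⁻¹ ^ 2 * mnorm m z ^ 2 / 2 +
    (U m (hypCurve a y' ψ t) - U m (hypCurve a y φ t))
  have hlin : IntegrableOn (fun t => δ⁻¹ * minner m (φ' t) z + δ⁻¹ ^ 2 * mnorm m z ^ 2 / 2) S :=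
    (hmi.const_mul _).add (integrable_const _)
  have hD : IntegrableOn D S := hlin.add hUint
  have hS : S ⊆ Ioi 1 := fun t ht => ht.1
  have heq : ∀ t ∈ Ioi (1:ℝ), hypIntegrand m a y' ψ ψ' t =
      hypIntegrand m a y φ φ' t + S.indicator D t := by
    intro t ht
    simp only [hypIntegrand, ψ', mnorm_shiftDeriv_sq hm]
    by_cases hts : t ∈ S
    · simp only [indicator_of_mem hts, D, S]
      ring
    · have : 1 + δ < t := by
        by_contra hcon
        exact hts ⟨ht, not_lt.1 hcon⟩
      rw [indicator_of_notMem hts, indicator_of_notMem hts, hlater t this]; ring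
  have hDind : IntegrableOn (S.indicator D) (Ioi 1) :=
    ((integrable_indicator_iff measurableSet_Ioc).2 hD).integrableOn
  have hint' : IntegrableOn (hypIntegrand m a y' ψ ψ') (Ioi 1) :=
    (hint.add hDind).congr_fun (fun t ht => (heq t ht).symm) measurableSet_Ioi
  have hcol' : ∀ᵐ t ∂volume.restrict (Ioi 1), ¬ collision (hypCurve a y' ψ t) := by
    filter_upwards [hcol, ae_restrict_mem measurableSet_Ioi] with t ht ht1
    rcases le_or_gt t (1 + δ) with h | h
    · exact (hlip _ _ (hγ' t ⟨le_of_lt ht1, h⟩) (hγ' t ⟨le_of_lt ht1, h⟩)).1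
    · rwa [hlater t h]
  refine ⟨ψ, ψ', hψ, ?_, ?_, ?_⟩
  · simp only [ψ, shiftCurve, add_sub_cancel_left, div_self hδ.ne', min_self, one_smul]
  · rw [hypAction_of_integrable hint' hcol']
    exact EReal.coe_ne_top _
  · have e1 : realAction m a y' ψ ψ' = realAction m a y φ φ' + ∫ t in S, D t := by
      unfold realAction
      rw [setIntegral_congr_fun measurableSet_Ioi heq, integral_add hint hDind,
        setIntegral_indicator measurableSet_Ioc, inter_eq_self_of_subset_right hS]
    have hvol : volume.real S = δ := by simp [S, hδ.le]
    have e2 : ∫ t in S, (U m (hypCurve a y' ψ t) - U m (hypCurve a y φ t)) ≤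
        C * mnorm m z * δ := by
      have : ∫ _ in S, C * mnorm m z = C * mnorm m z * δ := by
        rw [setIntegral_const, hvol, smul_eq_mul, mul_comm]
      rw [← this]
      refine setIntegral_mono_on hUint (integrable_const _) measurableSet_Ioc fun t ht => ?_
      have ht' := Ioc_subset_Icc_self ht
      exact (le_abs_self _).trans ((hlip _ _ (hγ' t ht') (hγ t ht')).2.trans
        (mul_le_mul_of_nonneg_left (hdiff t ht') hC.le))
    have e3 : ∫ t in S, D t = δ⁻¹ * minner m (φ (1 + δ)) z + δ * (δ⁻¹ ^ 2 * mnorm m z ^ 2 / 2) +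
        ∫ t in S, (U m (hypCurve a y' ψ t) - U m (hypCurve a y φ t)) := by
      simp only [D]
      rw [integral_add hlin hUint, integral_add (hmi.const_mul _) (integrable_const _),
        integral_const_mul, hmi', ← hφ.eq_integral (by linarith), setIntegral_const, hvol,
        smul_eq_mul]
    rw [e1, e3]
    have e4 : δ * (δ⁻¹ ^ 2 * mnorm m z ^ 2 / 2) = mnorm m z ^ 2 / (2 * δ) := by field_simp
    rw [e4, div_eq_inv_mul (minner m _ _)]
    linarith

/-! ### Weak compactness and lower semicontinuity -/

lemma exists_weakly_convergent_subseq {H : Type*} [NormedAddCommGroup H] [InnerProductSpace ℝ H]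
    [CompleteSpace H] [TopologicalSpace.SeparableSpace H] (f : ℕ → H) (K : ℝ)
    (hf : ∀ n, ‖f n‖ ≤ K) :
    ∃ g : H, ∃ σ : ℕ → ℕ, StrictMono σ ∧
      ∀ h : H, Tendsto (fun n => ⟪f (σ n), h⟫) atTop (𝓝 ⟪g, h⟫) := by
  have hmem : ∀ n, StrongDual.toWeakDual (InnerProductSpace.toDual ℝ H (f n)) ∈
      WeakDual.toStrongDual ⁻¹' Metric.closedBall (0 : StrongDual ℝ H) K := fun n => by
    simpa using hf n
  obtain ⟨L, -, σ, hσ, hL⟩ := WeakDual.isSeqCompact_closedBall ℝ H 0 K hmem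
  refine ⟨(InnerProductSpace.toDual ℝ H).symm (WeakDual.toStrongDual L), σ, hσ, fun h => ?_⟩
  have := (WeakDual.eval_continuous h).continuousAt.tendsto.comp hL
  rw [InnerProductSpace.toDual_symm_apply]
  exact this

lemma tendsto_of_forall_inner {H ι : Type*} [NormedAddCommGroup H] [InnerProductSpace ℝ H]
    [FiniteDimensional ℝ H] {l : Filter ι} {f : ι → H} {g : H}
    (h : ∀ c : H, Tendsto (fun n => ⟪c, f n⟫) l (𝓝 ⟪c, g⟫)) : Tendsto f l (𝓝 g) := by
  set b := stdOrthonormalBasis ℝ H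
  have := tendsto_finsetSum Finset.univ fun i _ => (h (b i)).smul_const (b i)
  simpa only [b.sum_repr'] using this

lemma norm_toLp_sq {m : Fin N → ℝ} (hm : ∀ i, 0 < m i) {φ' : ℝ → Conf d N}
    (h : MemLp (fun t => massEquiv m hm (φ' t)) 2 (volume.restrict (Ioi 1))) :
    ‖h.toLp _‖ ^ 2 = energy m φ' := by
  rw [← real_inner_self_eq_norm_sq, L2.inner_def, energy]
  refine integral_congr_ae ?_
  filter_upwards [h.coeFn_toLp] with t ht
  rw [ht, real_inner_self_eq_norm_sq, norm_massEquiv]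

/-- Curves of bounded energy have a subsequence converging pointwise to a curve whose energy
is at most the limit of the energies. -/
lemma exists_limit_curve {m : Fin N → ℝ} (hm : ∀ i, 0 < m i) (φ φ' : ℕ → ℝ → Conf d N)
    (hφ : ∀ n, InD m 1 ⊤ (φ n) (φ' n)) {K : ℝ} (hK : ∀ n, energy m (φ' n) ≤ K) :
    ∃ ψ ψ' : ℝ → Conf d N, ∃ σ : ℕ → ℕ, ∃ E : ℝ, StrictMono σ ∧ InD m 1 ⊤ ψ ψ' ∧
      (∀ t ≥ 1, Tendsto (fun n => φ (σ n) t) atTop (𝓝 (ψ t))) ∧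
      Tendsto (fun n => energy m (φ' (σ n))) atTop (𝓝 E) ∧ energy m ψ' ≤ E := by
  obtain ⟨E, -, σ₁, hσ₁, hE⟩ := tendsto_subseq_of_bounded (x := fun n => energy m (φ' n))
    (Metric.isBounded_Icc 0 K) fun n => ⟨energy_nonneg _ _, hK n⟩
  set L := massEquiv (d := d) m hm
  have hmem := fun n => (hφ (σ₁ n)).memLp hm
  have hbd : ∀ n, ‖(hmem n).toLp _‖ ≤ √K := fun n =>
    Real.le_sqrt_of_sq_le ((norm_toLp_sq hm (hmem n)).trans_le (hK _))
  have : Fact ((2 : ℝ≥0∞) ≠ ∞) := ⟨ENNReal.ofNat_ne_top⟩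
  obtain ⟨g, σ₂, hσ₂, hg⟩ := exists_weakly_convergent_subseq (fun n => (hmem n).toLp _) _ hbd
  set ψ' : ℝ → Conf d N := fun t => L.symm (g t) with hψ'
  have hLψ' : ∀ t, L (ψ' t) = g t := fun t => by simp [ψ']
  have hE' : Tendsto (fun n => energy m (φ' (σ₁ (σ₂ n)))) atTop (𝓝 E) :=
    hE.comp hσ₂.tendsto_atTop
  have hgL : MemLp (fun t => L (ψ' t)) 2 (volume.restrict (Ioi 1)) := by
    simp only [hLψ']; exact Lp.memLp g
  have hgE : ‖g‖ ^ 2 = energy m ψ' := by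
    have : hgL.toLp _ = g := by
      simp only [hLψ', Lp.toLp_coeFn]
    rw [← norm_toLp_sq hm hgL, this]
  have hsubset : ∀ t, Ioc 1 t ⊆ Ioi (1:ℝ) := fun t s hs => hs.1
  have hgint : ∀ t, IntegrableOn g (Ioc 1 t) := fun t => by
    have h1 : MemLp g 2 (volume.restrict (Ioc 1 t)) :=
      (Lp.memLp g).mono_measure (Measure.restrict_mono (hsubset t) le_rfl)
    exact h1.integrable (by norm_num)
  have hψint : ∀ t, IntegrableOn ψ' (Ioc 1 t) := fun t =>
    L.symm.toContinuousLinearMap.integrable_comp (hgint t)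
  set ψ : ℝ → Conf d N := fun t => ∫ s in Ioc 1 t, ψ' s
  have hLint : ∀ (χ' : ℝ → Conf d N) t, IntegrableOn χ' (Ioc 1 t) →
      L (∫ s in Ioc 1 t, χ' s) = ∫ s in Ioc 1 t, L (χ' s) := fun χ' t h =>
    (L.toContinuousLinearMap.integral_comp_comm h).symm
  have hlim : ∀ t ≥ (1:ℝ), Tendsto (fun n => φ (σ₁ (σ₂ n)) t) atTop (𝓝 (ψ t)) := by
    intro t ht
    have hfin : (volume.restrict (Ioi (1:ℝ))) (Ioc 1 t) ≠ ⊤ :=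
      ((Measure.restrict_apply_le _ _).trans_lt measure_Ioc_lt_top).ne
    have hres : (volume.restrict (Ioi (1:ℝ))).restrict (Ioc 1 t) = volume.restrict (Ioc 1 t) := by
      rw [Measure.restrict_restrict measurableSet_Ioc, inter_eq_self_of_subset_left (hsubset t)]
    have h1 : Tendsto (fun n => L (φ (σ₁ (σ₂ n)) t)) atTop (𝓝 (L (ψ t))) := by
      refine tendsto_of_forall_inner fun c => ?_
      have h2 := hg (indicatorConstLp 2 measurableSet_Ioc hfin c)
      have e1 : ∀ f : Lp (MassSpace d N) 2 (volume.restrict (Ioi (1:ℝ))),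
          ⟪f, indicatorConstLp 2 measurableSet_Ioc hfin c⟫ = ⟪c, ∫ s in Ioc 1 t, f s⟫ := by
        intro f
        rw [real_inner_comm, L2.inner_indicatorConstLp_eq_inner_setIntegral ℝ, hres]
      simp only [e1] at h2
      have e2 : L (ψ t) = ∫ s in Ioc 1 t, g s := by
        simp only [ψ]
        rw [hLint _ _ (hψint t)]
        simp only [hLψ']
      have e3 : ∀ n, L (φ (σ₁ (σ₂ n)) t) = ∫ s in Ioc 1 t, ((hmem (σ₂ n)).toLp _) s := fun n => by
        rw [(hφ _).eq_integral ht, hLint _ _ ((hφ _).integrableOn t)]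
        refine integral_congr_ae ?_
        filter_upwards [ae_restrict_of_ae_restrict_of_subset (hsubset t)
          (hmem (σ₂ n)).coeFn_toLp] with s hs
        exact hs.symm
      rw [e2]
      simpa only [e3] using h2
    simpa [Function.comp_def] using (L.symm.continuous.tendsto _).comp h1
  refine ⟨ψ, ψ', σ₁ ∘ σ₂, E, hσ₁.comp hσ₂, ⟨by simp [ψ], ?_, fun t _ _ => rfl,
    fun t _ _ => hψint t, ?_⟩, hlim, hE', ?_⟩
  · intro t ht _
    exact (isClosed_setX m).mem_of_tendsto (hlim t ht)
      (Eventually.of_forall fun n => (hφ _).inX ht)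
  · rw [timeSet_top]
    have := (memLp_two_iff_integrable_sq_norm hgL.1).1 hgL
    simpa only [L, norm_massEquiv, IntegrableOn] using this
  · have h1 : Tendsto (fun n => ‖(hmem (σ₂ n)).toLp _ - g‖ ^ 2) atTop
        (𝓝 (E - 2 * ⟪g, g⟫ + ‖g‖ ^ 2)) := by
      simp only [norm_sub_sq_real, norm_toLp_sq hm]
      exact ((hE').sub ((hg g).const_mul 2)).add_const _
    have h2 := ge_of_tendsto' h1 fun n => sq_nonneg _
    rw [real_inner_self_eq_norm_sq] at h2
    linarith

/-- The Newtonian potential with values in `[0, ∞]`, infinite at collisions. -/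
def extU (m : Fin N → ℝ) (x : Conf d N) : ℝ≥0∞ :=
  ∑ i : Fin N, ∑ j : Fin N,
    if i < j then ENNReal.ofReal (m i * m j) * (ENNReal.ofReal ‖x i - x j‖)⁻¹ else 0

lemma continuous_extU (m : Fin N → ℝ) : Continuous (extU (d := d) m) := by
  unfold extU
  refine continuous_finsetSum _ fun i _ => continuous_finsetSum _ fun j _ => ?_
  split_ifs
  · refine (ENNReal.continuous_const_mul ENNReal.ofReal_ne_top).comp (Continuous.inv ?_)
    exact ENNReal.continuous_ofReal.comp (by fun_prop)
  · exact continuous_const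

lemma U_nonneg {m : Fin N → ℝ} (hm : ∀ i, 0 < m i) (x : Conf d N) : 0 ≤ U m x := by
  refine Finset.sum_nonneg fun i _ => Finset.sum_nonneg fun j _ => ?_
  have := (hm i).le
  have := (hm j).le
  split_ifs <;> positivity

lemma extU_eq_ofReal {m : Fin N → ℝ} (hm : ∀ i, 0 < m i) {x : Conf d N} (hx : ¬ collision x) :
    extU m x = ENNReal.ofReal (U m x) := by
  have hpos : ∀ i j, 0 ≤ if i < j then m i * m j / ‖x i - x j‖ else 0 := fun i j => by
    have := (hm i).le
    have := (hm j).le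
    split_ifs <;> positivity
  unfold extU U
  rw [ENNReal.ofReal_sum_of_nonneg fun i _ => Finset.sum_nonneg fun j _ => hpos i j]
  refine Finset.sum_congr rfl fun i _ => ?_
  rw [ENNReal.ofReal_sum_of_nonneg fun j _ => hpos i j]
  refine Finset.sum_congr rfl fun j _ => ?_
  split_ifs with hij
  · have h0 : 0 < ‖x i - x j‖ := norm_pos_iff.2 fun h => hx ⟨i, j, hij.ne, sub_eq_zero.1 h⟩
    rw [ENNReal.ofReal_div_of_pos h0, div_eq_mul_inv]
  · simp

lemma extU_eq_top {m : Fin N → ℝ} (hm : ∀ i, 0 < m i) {x : Conf d N} (hx : collision x) :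
    extU m x = ⊤ := by
  obtain ⟨i, j, hlt, hij⟩ : ∃ i j, i < j ∧ x i = x j := by
    obtain ⟨i, j, hne, hij⟩ := hx
    rcases hne.lt_or_gt with h | h
    · exact ⟨i, j, h, hij⟩
    · exact ⟨j, i, h, hij.symm⟩
  refine ENNReal.sum_eq_top.2
    ⟨i, Finset.mem_univ _, ENNReal.sum_eq_top.2 ⟨j, Finset.mem_univ _, ?_⟩⟩
  have := mul_pos (hm i) (hm j)
  simp [hlt, hij, ENNReal.mul_top, this]

lemma measurable_U (m : Fin N → ℝ) : Measurable (U (d := d) m) := by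
  unfold U
  refine Finset.measurable_sum _ fun i _ => Finset.measurable_sum _ fun j _ => ?_
  split_ifs
  · exact measurable_const.div ((measurable_pi_apply i).sub (measurable_pi_apply j)).norm
  · exact measurable_const

lemma aemeasurable_potential {m : Fin N → ℝ} (a x : Conf d N) {φ φ' : ℝ → Conf d N}
    (hφ : InD m 1 ⊤ φ φ') :
    AEMeasurable (fun t => U m (hypCurve a x φ t) - U m (t • a)) (volume.restrict (Ioi 1)) := by
  have h1 : ContinuousOn (hypCurve a x φ) (Ioi 1) := by
    have := hφ.continuousOn.mono Ioi_subset_Ici_self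
    unfold hypCurve
    fun_prop
  have h2 : Continuous fun t : ℝ => t • a := by fun_prop
  exact ((measurable_U m).comp_aemeasurable (h1.aemeasurable measurableSet_Ioi)).sub
    ((measurable_U m).comp h2.measurable).aemeasurable

/-- Fatou's lemma for the renormalized potential. -/
lemma potential_lsc {m : Fin N → ℝ} (hm : ∀ i, 0 < m i) {a x : Conf d N}
    (ha : ¬ collision a) (φ φ' : ℕ → ℝ → Conf d N) (hφ : ∀ n, InD m 1 ⊤ (φ n) (φ' n))
    {K : ℝ} (hK : ∀ n, energy m (φ' n) ≤ K) (htop : ∀ n, hypAction m a x ⊤ (φ n) (φ' n) ≠ ⊤)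
    {ψ ψ' : ℝ → Conf d N} (hψ : InD m 1 ⊤ ψ ψ')
    (hlim : ∀ t ≥ 1, Tendsto (fun n => φ n t) atTop (𝓝 (ψ t))) {p : ℝ}
    (hp : Tendsto (fun n => ∫ t in Ioi (1:ℝ), (U m (hypCurve a x (φ n) t) - U m (t • a)))
      atTop (𝓝 p)) :
    (∀ᵐ t ∂volume.restrict (Ioi 1), ¬ collision (hypCurve a x ψ t)) ∧
      IntegrableOn (fun t => U m (hypCurve a x ψ t) - U m (t • a)) (Ioi 1) ∧
      ∫ t in Ioi (1:ℝ), (U m (hypCurve a x ψ t) - U m (t • a)) ≤ p := by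
  obtain ⟨C, hC, hlow⟩ := exists_potential_lower_bound_curve m hm ha (mnorm m (x - a))
  set g : ℝ → ℝ := fun t => C * (1 + √K) * t ^ (-(3/2) : ℝ)
  have hg : IntegrableOn g (Ioi 1) := integrableOn_rpow_three_halves.const_mul _
  set P : (ℝ → Conf d N) → ℝ → ℝ := fun χ t => U m (hypCurve a x χ t) - U m (t • a)
  have hPint : ∀ n, IntegrableOn (P (φ n)) (Ioi 1) := fun n =>
    (integrable_potential (hφ n) (htop n)).1
  have hPg : ∀ n, IntegrableOn (fun t => P (φ n) t + g t) (Ioi 1) := fun n => (hPint n).add hg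
  have hcol : ∀ᵐ t ∂volume.restrict (Ioi 1), ∀ n, ¬ collision (hypCurve a x (φ n) t) :=
    ae_all_iff.2 fun n => (hypAction_eq_realAction (htop n)).2.1
  set G := ∫ t in Ioi (1:ℝ), g t
  have hPn : ∀ n, 0 ≤ᵐ[volume.restrict (Ioi 1)] fun t => P (φ n) t + g t := fun n => by
    filter_upwards [hcol, ae_restrict_mem measurableSet_Ioi] with t ht ht1
    have := hlow x le_rfl (φ n) (φ' n) (hφ n) K (hK n) t (le_of_lt ht1) (ht n)
    simp only [P, g, Pi.zero_apply]
    linarith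
  have hI : ∀ n, ∫⁻ t in Ioi (1:ℝ), ENNReal.ofReal (P (φ n) t + g t) =
      ENNReal.ofReal ((∫ t in Ioi (1:ℝ), P (φ n) t) + G) := fun n => by
    rw [← ofReal_integral_eq_lintegral_ofReal (hPg n) (hPn n), integral_add (hPint n) hg]
  have hpG : 0 ≤ p + G := by
    refine ge_of_tendsto' (hp.add_const G) fun n => ?_
    rw [← integral_add (hPint n) hg]
    exact integral_nonneg_of_ae (hPn n)
  set q : ℝ → ℝ≥0∞ := fun t => extU m (hypCurve a x ψ t) + ENNReal.ofReal (g t) -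
    ENNReal.ofReal (U m (t • a))
  have hq_eq : ∀ χ t, 1 < t → ¬ collision (hypCurve a x χ t) →
      extU m (hypCurve a x χ t) + ENNReal.ofReal (g t) - ENNReal.ofReal (U m (t • a)) =
        ENNReal.ofReal (P χ t + g t) := by
    intro χ t ht hc
    have hgt : 0 ≤ g t := by
      have : 0 < t := by linarith
      positivity
    rw [extU_eq_ofReal hm hc, ← ENNReal.ofReal_add (U_nonneg hm _) hgt,
      ← ENNReal.ofReal_sub _ (U_nonneg hm _)]
    congr 1
    simp only [P]
    ring
  have hqlim : ∀ᵐ t ∂volume.restrict (Ioi 1),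
      q t = liminf (fun n => ENNReal.ofReal (P (φ n) t + g t)) atTop := by
    filter_upwards [hcol, ae_restrict_mem measurableSet_Ioi] with t ht ht1
    have h1 : Tendsto (fun n => hypCurve a x (φ n) t) atTop (𝓝 (hypCurve a x ψ t)) := by
      unfold hypCurve
      exact (((hlim t (le_of_lt ht1)).add_const _).add_const _).sub_const _
    have h2 := ((continuous_extU m).tendsto _).comp h1
    have h3 : Tendsto (fun n => extU m (hypCurve a x (φ n) t) + ENNReal.ofReal (g t) -
        ENNReal.ofReal (U m (t • a))) atTop (𝓝 (q t)) :=
      ENNReal.Tendsto.sub (h2.add tendsto_const_nhds) tendsto_const_nhds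
        (Or.inr ENNReal.ofReal_ne_top)
    simp only [hq_eq _ t ht1 (ht _)] at h3
    exact h3.liminf_eq.symm
  have hfatou : ∫⁻ t in Ioi (1:ℝ), q t ≤ ENNReal.ofReal (p + G) := by
    rw [lintegral_congr_ae hqlim]
    refine (lintegral_liminf_le' fun n => (hPg n).aemeasurable.ennreal_ofReal).trans_eq ?_
    simp only [hI]
    exact (ENNReal.tendsto_ofReal (hp.add_const G)).liminf_eq
  have hPmeas : AEMeasurable (fun t => P ψ t + g t) (volume.restrict (Ioi 1)) :=
    (aemeasurable_potential a x hψ).add hg.aemeasurable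
  have hqmeas : AEMeasurable q (volume.restrict (Ioi 1)) := by
    have h1 : ContinuousOn (hypCurve a x ψ) (Ioi 1) := by
      have := hψ.continuousOn.mono Ioi_subset_Ici_self
      unfold hypCurve
      fun_prop
    have h2 : Continuous fun t : ℝ => t • a := by fun_prop
    exact (((continuous_extU m).measurable.comp_aemeasurable (h1.aemeasurable
      measurableSet_Ioi)).add hg.aemeasurable.ennreal_ofReal).sub
        ((measurable_U m).comp h2.measurable).aemeasurable.ennreal_ofReal
  have hqtop : ∀ᵐ t ∂volume.restrict (Ioi 1), q t < ⊤ :=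
    ae_lt_top' hqmeas (hfatou.trans_lt ENNReal.ofReal_lt_top).ne
  have hcolψ : ∀ᵐ t ∂volume.restrict (Ioi 1), ¬ collision (hypCurve a x ψ t) := by
    filter_upwards [hqtop] with t ht hc
    simp [q, extU_eq_top hm hc] at ht
  have hqP : q =ᵐ[volume.restrict (Ioi 1)] fun t => ENNReal.ofReal (P ψ t + g t) := by
    filter_upwards [hcolψ, ae_restrict_mem measurableSet_Ioi] with t ht ht1
    exact hq_eq ψ t ht1 ht
  have hPψn : 0 ≤ᵐ[volume.restrict (Ioi 1)] fun t => P ψ t + g t := by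
    filter_upwards [hcol, hcolψ, ae_restrict_mem measurableSet_Ioi] with t ht htψ ht1
    have h1 : Tendsto (fun n => hypCurve a x (φ n) t) atTop (𝓝 (hypCurve a x ψ t)) := by
      unfold hypCurve
      exact (((hlim t (le_of_lt ht1)).add_const _).add_const _).sub_const _
    have h2 := ((U_contDiffAt m htψ).continuousAt.tendsto.comp h1).sub_const (U m (t • a))
    refine ge_of_tendsto' (h2.add_const (g t)) fun n => ?_
    have := hlow x le_rfl (φ n) (φ' n) (hφ n) K (hK n) t (le_of_lt ht1) (ht n)
    simp only [g, Function.comp, Pi.zero_apply]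
    linarith
  rw [lintegral_congr_ae hqP] at hfatou
  have hPψ : IntegrableOn (fun t => P ψ t + g t) (Ioi 1) := by
    refine ⟨hPmeas.aestronglyMeasurable, ?_⟩
    rw [hasFiniteIntegral_iff_ofReal hPψn]
    exact hfatou.trans_lt ENNReal.ofReal_lt_top
  have hPψ' : IntegrableOn (P ψ) (Ioi 1) := by
    have := hPψ.sub hg
    refine this.congr (ae_of_all _ fun t => ?_)
    simp
  refine ⟨hcolψ, hPψ', ?_⟩
  rw [← ofReal_integral_eq_lintegral_ofReal hPψ hPψn, ENNReal.ofReal_le_ofReal_iff hpG,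
    integral_add hPψ' hg] at hfatou
  linarith

/-- Lower semicontinuity of the renormalized action along sequences of bounded energy. -/
lemma exists_limit_of_tendsto_action {m : Fin N → ℝ} (hm : ∀ i, 0 < m i) {a x : Conf d N}
    (ha : ¬ collision a) (φ φ' : ℕ → ℝ → Conf d N) (hφ : ∀ n, InD m 1 ⊤ (φ n) (φ' n))
    {K : ℝ} (hK : ∀ n, energy m (φ' n) ≤ K) (htop : ∀ n, hypAction m a x ⊤ (φ n) (φ' n) ≠ ⊤)
    {I : ℝ} (hI : Tendsto (fun n => realAction m a x (φ n) (φ' n)) atTop (𝓝 I)) :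
    ∃ ψ ψ' : ℝ → Conf d N, ∃ σ : ℕ → ℕ, StrictMono σ ∧ InD m 1 ⊤ ψ ψ' ∧
      (∀ t ≥ 1, Tendsto (fun n => φ (σ n) t) atTop (𝓝 (ψ t))) ∧
      hypAction m a x ⊤ ψ ψ' ≤ I := by
  obtain ⟨ψ, ψ', σ, E, hσ, hψ, hlim, hE, hle⟩ := exists_limit_curve hm φ φ' hφ hK
  have hp : Tendsto (fun n => ∫ t in Ioi (1:ℝ), (U m (hypCurve a x (φ (σ n)) t) - U m (t • a)))
      atTop (𝓝 (I - E / 2)) := by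
    refine ((hI.comp hσ.tendsto_atTop).sub (hE.div_const 2)).congr fun n => ?_
    have := (integrable_potential (hφ (σ n)) (htop (σ n))).2
    simp only [Function.comp, this]
    ring
  obtain ⟨h1, h2, h3⟩ := potential_lsc hm ha (fun n => φ (σ n)) (fun n => φ' (σ n))
    (fun n => hφ _) (fun n => hK _) (fun n => htop _) hψ hlim hp
  have h4 : IntegrableOn (hypIntegrand m a x ψ ψ') (Ioi 1) := by
    refine ((hψ.integrable_sq.div_const 2).add h2).congr (ae_of_all _ fun t => ?_)
    simp only [hypIntegrand, Pi.add_apply]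
    ring
  have h5 := hypAction_of_integrable h4 h1
  have h6 : hypAction m a x ⊤ ψ ψ' ≠ ⊤ := h5 ▸ EReal.coe_ne_top _
  refine ⟨ψ, ψ', σ, hσ, hψ, hlim, ?_⟩
  rw [h5, (integrable_potential hψ h6).2]
  exact EReal.coe_le_coe_iff.2 (by linarith)

/-! ### The infimum of the action -/

lemma hypInf_le {m : Fin N → ℝ} {a y : Conf d N} {φ φ' : ℝ → Conf d N}
    (h : InD m 1 ⊤ φ φ') : hypInf m a y ⊤ ≤ hypAction m a y ⊤ φ φ' :=
  iInf_le_of_le φ (iInf_le_of_le φ' (iInf_le _ h))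

lemma coe_toReal_hypInf {m : Fin N → ℝ} (hm : ∀ i, 0 < m i) {a y : Conf d N}
    (ha : ¬ collision a) {φ φ' : ℝ → Conf d N} (hφ : InD m 1 ⊤ φ φ')
    (htop : hypAction m a y ⊤ φ φ' ≠ ⊤) :
    ((hypInf m a y ⊤).toReal : EReal) = hypInf m a y ⊤ := by
  refine EReal.coe_toReal (ne_top_of_le_ne_top htop (hypInf_le hφ)) ?_
  obtain ⟨C, -, hC⟩ := exists_coercive m hm ha (mnorm m (y - a))
  have hle : ((-C / 4 : ℝ) : EReal) ≤ hypInf m a y ⊤ := by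
    refine le_iInf fun ψ => le_iInf fun ψ' => le_iInf fun hψ => ?_
    by_cases ht : hypAction m a y ⊤ ψ ψ' = ⊤
    · rw [ht]; exact le_top
    · rw [(hypAction_eq_realAction ht).2.2, EReal.coe_le_coe_iff]
      linarith [hC y le_rfl ψ ψ' hψ ht, energy_nonneg m ψ']
  exact ne_bot_of_le_ne_bot (EReal.coe_ne_bot _) hle

lemma toReal_hypInf_le {m : Fin N → ℝ} (hm : ∀ i, 0 < m i) {a y : Conf d N}
    (ha : ¬ collision a) {φ φ' : ℝ → Conf d N} (hφ : InD m 1 ⊤ φ φ')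
    (htop : hypAction m a y ⊤ φ φ' ≠ ⊤) :
    (hypInf m a y ⊤).toReal ≤ realAction m a y φ φ' := by
  rw [← EReal.coe_le_coe_iff, coe_toReal_hypInf hm ha hφ htop,
    ← (hypAction_eq_realAction htop).2.2]
  exact hypInf_le hφ

lemma exists_realAction_lt {m : Fin N → ℝ} (hm : ∀ i, 0 < m i) {a y : Conf d N}
    (ha : ¬ collision a) {φ φ' : ℝ → Conf d N} (hφ : InD m 1 ⊤ φ φ')
    (htop : hypAction m a y ⊤ φ φ' ≠ ⊤) {η : ℝ} (hη : 0 < η) :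
    ∃ ψ ψ' : ℝ → Conf d N, InD m 1 ⊤ ψ ψ' ∧ hypAction m a y ⊤ ψ ψ' ≠ ⊤ ∧
      realAction m a y ψ ψ' < (hypInf m a y ⊤).toReal + η := by
  have hlt : hypInf m a y ⊤ < (((hypInf m a y ⊤).toReal + η : ℝ) : EReal) := by
    nth_rw 1 [← coe_toReal_hypInf hm ha hφ htop]
    rw [EReal.coe_lt_coe_iff]; linarith
  unfold hypInf at hlt
  simp only [iInf_lt_iff] at hlt
  obtain ⟨ψ, ψ', hψ, h⟩ := hlt
  have ht : hypAction m a y ⊤ ψ ψ' ≠ ⊤ := h.ne_top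
  refine ⟨ψ, ψ', hψ, ht, ?_⟩
  rw [(hypAction_eq_realAction ht).2.2, EReal.coe_lt_coe_iff] at h
  exact h

lemma inD_zero (m : Fin N → ℝ) : InD m 1 ⊤ (fun _ => (0 : Conf d N)) (fun _ => 0) := by
  refine ⟨rfl, fun _ _ _ => by simp [inX], fun _ _ _ => by simp,
    fun _ _ _ => integrableOn_zero, ?_⟩
  simp [mnorm, minner]

/-- A unique minimizer has finite action: otherwise every curve would be a minimizer. -/
lemma hypAction_ne_top_of_unique {m : Fin N → ℝ} (hm : ∀ i, 0 < m i) (hN : 2 ≤ N)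
    {a x : Conf d N} (ha : inOmega m a) {φ φ' : ℝ → Conf d N}
    (hmin : hypAction m a x ⊤ φ φ' = hypInf m a x ⊤)
    (huniq : ∀ ψ ψ' : ℝ → Conf d N, InD m 1 ⊤ ψ ψ' →
      hypAction m a x ⊤ ψ ψ' = hypInf m a x ⊤ → ∀ t : ℝ, 1 ≤ t → ψ t = φ t) :
    hypAction m a x ⊤ φ φ' ≠ ⊤ := by
  intro htop
  have hall : ∀ ψ ψ' : ℝ → Conf d N, InD m 1 ⊤ ψ ψ' → ψ 2 = φ 2 := fun ψ ψ' hψ =>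
    huniq ψ ψ' hψ (le_antisymm (by rw [← hmin, htop]; exact le_top) (hypInf_le hψ)) 2 one_le_two
  have h := (hall _ _ ((inD_zero m).shift hm one_pos ha.1)).trans (hall _ _ (inD_zero m)).symm
  have ha0 : a = 0 := by
    norm_num [shiftCurve] at h
    exact h
  refine ha.2 ⟨⟨0, by omega⟩, ⟨1, by omega⟩, by simp, by simp [ha0]⟩

/-- Curves whose action is almost minimal are pointwise close to a unique minimizer. -/
lemma exists_stability {m : Fin N → ℝ} (hm : ∀ i, 0 < m i)
    {a x : Conf d N} (ha : ¬ collision a) {φ φ' : ℝ → Conf d N} (hφ : InD m 1 ⊤ φ φ')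
    (htop : hypAction m a x ⊤ φ φ' ≠ ⊤)
    (huniq : ∀ ψ ψ' : ℝ → Conf d N, InD m 1 ⊤ ψ ψ' →
      hypAction m a x ⊤ ψ ψ' = hypInf m a x ⊤ → ∀ t : ℝ, 1 ≤ t → ψ t = φ t)
    {t : ℝ} (ht : 1 ≤ t) {η : ℝ} (hη : 0 < η) :
    ∃ κ > 0, ∀ ψ ψ' : ℝ → Conf d N, InD m 1 ⊤ ψ ψ' → hypAction m a x ⊤ ψ ψ' ≠ ⊤ →
      realAction m a x ψ ψ' ≤ (hypInf m a x ⊤).toReal + κ → mnorm m (ψ t - φ t) ≤ η := by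
  by_contra! hcon
  choose ψ ψ' hψ hψtop hψle hψfar using
    fun n : ℕ => hcon (1 / ((n : ℝ) + 1)) Nat.one_div_pos_of_nat
  obtain ⟨C, -, hC⟩ := exists_coercive m hm ha (mnorm m (x - a))
  have hlim : Tendsto (fun n => realAction m a x (ψ n) (ψ' n)) atTop
      (𝓝 (hypInf m a x ⊤).toReal) := by
    refine tendsto_of_tendsto_of_tendsto_of_le_of_le tendsto_const_nhds ?_
      (fun n => toReal_hypInf_le hm ha (hψ n) (hψtop n)) hψle
    simpa using tendsto_one_div_add_atTop_nhds_zero_nat.const_add (hypInf m a x ⊤).toReal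
  have hen : ∀ n, energy m (ψ' n) ≤ 4 * ((hypInf m a x ⊤).toReal + 1) + C := fun n => by
    have h1 : 1 / ((n : ℝ) + 1) ≤ 1 := by
      rw [div_le_one (by positivity)]
      linarith [n.cast_nonneg (α := ℝ)]
    linarith [hC x le_rfl _ _ (hψ n) (hψtop n), hψle n]
  obtain ⟨χ, χ', σ, -, hχ, hconv, hle⟩ :=
    exists_limit_of_tendsto_action hm ha ψ ψ' hψ hen hψtop hlim
  rw [coe_toReal_hypInf hm ha hφ htop] at hle
  have heq := huniq χ χ' hχ (le_antisymm hle (hypInf_le hχ)) t ht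
  obtain ⟨K, hK, hKle⟩ := exists_mnorm_le_norm (d := d) m hm
  have hconv' := tendsto_iff_norm_sub_tendsto_zero.1 (hconv t ht)
  obtain ⟨n, hn⟩ := ((hconv'.const_mul K).eventually_lt_const (by simpa using hη)).exists
  rw [heq] at hn
  exact absurd ((hKle _).trans hn.le) (not_le.2 (hψfar (σ n)))

lemma eventually_abs_minner_div_sub_le {m : Fin N → ℝ} (hm : ∀ i, 0 < m i)
    {φ : ℝ → Conf d N} {w : Conf d N} (hw : HasDerivWithinAt φ w (Ici (1:ℝ)) 1) (h1 : φ 1 = 0)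
    {ε : ℝ} (hε : 0 < ε) :
    ∀ᶠ δ in 𝓝[>] (0:ℝ), ∀ z : Conf d N,
      |minner m (φ (1 + δ)) z / δ - minner m w z| ≤ ε * mnorm m z := by
  obtain ⟨K, hK, hKle⟩ := exists_mnorm_le_norm (d := d) m hm
  have h := hw.isLittleO.def (c := ε / K) (by positivity)
  have htend : Tendsto (fun δ : ℝ => 1 + δ) (𝓝[>] 0) (𝓝[≥] 1) := by
    refine tendsto_nhdsWithin_iff.2 ⟨?_, ?_⟩
    · have : Tendsto (fun δ : ℝ => 1 + δ) (𝓝 0) (𝓝 (1 + 0)) := by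
        exact (continuous_const.add continuous_id).tendsto 0
      rw [add_zero] at this
      exact this.mono_left nhdsWithin_le_nhds
    · filter_upwards [self_mem_nhdsWithin] with δ hδ
      simp only [mem_Ioi] at hδ
      simp only [mem_Ici]; linarith
  filter_upwards [htend.eventually h, self_mem_nhdsWithin] with δ hδ hpos z
  simp only [mem_Ioi] at hpos
  simp only [h1, sub_zero, add_sub_cancel_left, Real.norm_eq_abs, abs_of_pos hpos] at hδ
  have hb : mnorm m (φ (1 + δ) - δ • w) ≤ ε * δ := by
    refine (hKle _).trans ((mul_le_mul_of_nonneg_left ?_ hK.le).trans_eq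
      (show K * (ε / K * δ) = ε * δ by field_simp))
    simpa using hδ
  have heq : minner m (φ (1 + δ)) z / δ - minner m w z = minner m (φ (1 + δ) - δ • w) z / δ := by
    rw [minner_sub_left, minner_smul_left]; field_simp
  rw [heq, abs_div, abs_of_pos hpos, div_le_iff₀ hpos]
  calc _ ≤ mnorm m (φ (1 + δ) - δ • w) * mnorm m z := abs_minner_le m hm _ _
    _ ≤ ε * δ * mnorm m z := mul_le_mul_of_nonneg_right hb (mnorm_nonneg m z)
    _ = _ := by ring

lemma abs_hypInf_sub_add_minner_le {m : Fin N → ℝ} (hm : ∀ i, 0 < m i)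
    {a : Conf d N} (ha : ¬ collision a) {x : Conf d N} (hx : inOmega m x)
    {φ φ' : ℝ → Conf d N} (hφ : InD m 1 ⊤ φ φ')
    (hmin : hypAction m a x ⊤ φ φ' = hypInf m a x ⊤) (htop : hypAction m a x ⊤ φ φ' ≠ ⊤)
    (huniq : ∀ ψ ψ' : ℝ → Conf d N, InD m 1 ⊤ ψ ψ' →
      hypAction m a x ⊤ ψ ψ' = hypInf m a x ⊤ → ∀ t : ℝ, 1 ≤ t → ψ t = φ t)
    {w : Conf d N} (hw : HasDerivWithinAt φ w (Ici (1:ℝ)) 1) {ε : ℝ} (hε : 0 < ε) :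
    ∃ ρ > 0, ∀ y, inX m y → 0 < mnorm m (y - x) → mnorm m (y - x) < ρ →
      |(hypInf m a y ⊤).toReal - (hypInf m a x ⊤).toReal + minner m w (y - x)| ≤
        ε * mnorm m (y - x) := by
  set I := (hypInf m a x ⊤).toReal with hI
  have hφI : realAction m a x φ φ' = I := by
    rw [hI, ← hmin, (hypAction_eq_realAction htop).2.2, EReal.toReal_coe]
  obtain ⟨C₀, -, hcoer⟩ := exists_coercive m hm ha (mnorm m (x - a) + 1)
  set R := max (energy m φ') (4 * (I + 2) + C₀)
  have hR : 0 ≤ R := (energy_nonneg m φ').trans (le_max_left _ _)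
  obtain ⟨r, hr, δ₀, hδ₀, C, hC, hshift⟩ := exists_shift_action_le m hm a hx.2 hR
  obtain ⟨δ, hslope, hδ, hδlt⟩ :=
    ((eventually_abs_minner_div_sub_le hm hw hφ.1 (ε := ε / 8) (by positivity)).and
      (Ioo_mem_nhdsGT (show 0 < min δ₀ (ε / (8 * C)) by positivity))).exists
  have hδle : δ ≤ δ₀ := (hδlt.trans_le (min_le_left _ _)).le
  have hCδ : C * δ ≤ ε / 8 := by
    have h := (hδlt.trans_le (min_le_right _ _)).le
    rw [le_div_iff₀ (by positivity)] at h
    linarith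
  obtain ⟨κ, hκ, hstab⟩ := exists_stability hm ha hφ htop huniq (t := 1 + δ) (by linarith)
    (η := ε * δ / 8) (by positivity)
  set B := δ * R + 1
  have hB : ∀ ψ ψ' : ℝ → Conf d N, InD m 1 ⊤ ψ ψ' → energy m ψ' ≤ R →
      mnorm m (ψ (1 + δ)) ≤ B := fun ψ ψ' hψ hE => by
    have h1 := hψ.mnorm_sq_le hm (t := 1 + δ) (by linarith)
    have h2 : (1 + δ - 1) * energy m ψ' ≤ δ * R := by
      rw [add_sub_cancel_left]; exact mul_le_mul_of_nonneg_left hE hδ.le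
    nlinarith [mnorm_nonneg m (ψ (1 + δ))]
  set K := B / δ + 1 / (2 * δ) + C * δ
  have hBpos : 0 < B := by positivity
  have hK : 0 < K := by positivity
  refine ⟨min (min r 1) (min (min (1 / K) (κ / (2 * K + 1))) (min (ε * δ / 8) (ε / 8))),
    by positivity, fun y hy hz0 hzρ => ?_⟩
  simp only [lt_min_iff] at hzρ
  obtain ⟨⟨hzr, hz1⟩, ⟨hzK, hzκ⟩, hzδ, hzε⟩ := hzρ
  rw [lt_div_iff₀ (by positivity)] at hzK hzκ
  set s := mnorm m (y - x)
  have hs' : mnorm m (x - y) = s := mnorm_sub_rev m hm x y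
  have hxx : mnorm m (x - x) < r := by simpa [mnorm, minner] using hr
  have hKbound : ∀ ψ ψ' : ℝ → Conf d N, InD m 1 ⊤ ψ ψ' → energy m ψ' ≤ R → ∀ z : Conf d N,
      mnorm m z = s → minner m (ψ (1 + δ)) z / δ + s ^ 2 / (2 * δ) + C * δ * s ≤ K * s := by
    intro ψ ψ' hψ hE z hz
    have h1 : minner m (ψ (1 + δ)) z / δ ≤ B * s / δ := by
      refine div_le_div_of_nonneg_right ?_ hδ.le
      refine (le_abs_self _).trans ((abs_minner_le m hm _ _).trans ?_)
      rw [hz]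
      exact mul_le_mul_of_nonneg_right (hB ψ ψ' hψ hE) hz0.le
    have h2 : s ^ 2 / (2 * δ) ≤ s / (2 * δ) := by
      refine div_le_div_of_nonneg_right ?_ (by positivity)
      nlinarith
    calc _ ≤ B * s / δ + s / (2 * δ) + C * δ * s := by linarith
      _ = K * s := by simp only [K]; ring
  have hquad : s ^ 2 / (2 * δ) ≤ ε / 16 * s := by
    rw [div_le_iff₀ (by positivity)]
    linarith [mul_le_mul_of_nonneg_right hzδ.le hz0.le]
  have hsq : s ^ 2 ≤ ε / 8 * s := by rw [sq]; exact mul_le_mul_of_nonneg_right hzε.le hz0.le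
  have hsq1 : s ^ 2 ≤ s := by nlinarith
  have hCδs : C * δ * s ≤ ε / 8 * s := mul_le_mul_of_nonneg_right hCδ hz0.le
  have hεs : 0 < ε * s := by positivity
  obtain ⟨ψ, ψ', hψ, -, hψtop, hψle⟩ := hshift x y hx.1 hy hxx hzr δ hδ hδle φ φ' hφ
    (le_max_left _ _) htop
  have hIy := (toReal_hypInf_le hm ha hψ hψtop).trans hψle
  rw [hφI, hs'] at hIy
  have hIyK : (hypInf m a y ⊤).toReal ≤ I + K * s := by
    linarith [hKbound φ φ' hφ (le_max_left _ _) (x - y) hs']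
  have hneg : minner m (φ (1 + δ)) (x - y) = -minner m (φ (1 + δ)) (y - x) := by
    rw [minner_sub_right, minner_sub_right]; ring
  have hsl := abs_le.1 (hslope (y - x))
  rw [abs_le]
  constructor
  · obtain ⟨χ, χ', hχ, hχtop, hχlt⟩ := exists_realAction_lt hm ha hψ hψtop (pow_pos hz0 2)
    have hya : mnorm m (y - a) ≤ mnorm m (x - a) + 1 := by
      have h := mnorm_add_le m hm (y - x) (x - a)
      rw [sub_add_sub_cancel] at h
      linarith
    have hχE : energy m χ' ≤ R := by
      refine le_trans ?_ (le_max_right _ _)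
      linarith [hcoer y hya χ χ' hχ hχtop]
    obtain ⟨ζ, ζ', hζ, hζδ, hζtop, hζle⟩ := hshift y x hy hx.1 hzr hxx δ hδ hδle χ χ' hχ hχE hχtop
    have hclose := hstab ζ ζ' hζ hζtop (by
      linarith [hKbound χ χ' hχ hχE (y - x) rfl])
    have hIx := (toReal_hypInf_le hm ha hζ hζtop).trans hζle
    rw [← hI] at hIx
    have hdiff : mnorm m (χ (1 + δ) - φ (1 + δ)) ≤ ε * δ / 8 + s := by
      have h := mnorm_add_le m hm (ζ (1 + δ) - φ (1 + δ)) (x - y)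
      rw [hs', hζδ, show χ (1 + δ) + (y - x) - φ (1 + δ) + (x - y) = χ (1 + δ) - φ (1 + δ) by
        abel, ← hζδ] at h
      linarith
    have hcmp : minner m (χ (1 + δ)) (y - x) / δ ≤
        minner m (φ (1 + δ)) (y - x) / δ + ε / 4 * s := by
      have h := (le_abs_self _).trans (abs_minner_le m hm (χ (1 + δ) - φ (1 + δ)) (y - x))
      rw [minner_sub_left] at h
      rw [div_add' _ _ _ hδ.ne', div_le_div_iff_of_pos_right hδ]
      linarith [mul_le_mul_of_nonneg_right hdiff hz0.le, mul_le_mul_of_nonneg_right hzδ.le hz0.le]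
    linarith
  · rw [hneg, neg_div] at hIy
    linarith

/-- **Differentiability of the value function at regular points** : if `x ∈ Ω`, `A_x` has a
unique minimizer `φˣ` on `D₀^{1,2}(1,+∞)` (uniqueness meaning that any minimizer agrees
with `φˣ` on `[1,∞)`), and `φˣ` has a right derivative `w = φ̇ˣ(1)` at `t = 1`, then `v` is
differentiable at `x` (within `X`) with differential `z ↦ −⟨a + w, z⟩_M`; that is, in terms
of the motion `γˣ(t) = a t + φˣ(t) + x − a`, the mass-gradient of `v` at `x` is `−γ̇ˣ(1)`. -/
theorem value_function_differentiable_at_regular_point {d N : ℕ} (hd : 2 ≤ d) (hN : 2 ≤ N)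
    (m : Fin N → ℝ) (hm : ∀ i, 0 < m i)
    (a : Conf d N) (ha : inOmega m a)
    (x : Conf d N) (hx : inOmega m x)
    (φx φx' : ℝ → Conf d N) (hφx : InD m 1 ⊤ φx φx')
    (hmin : hypAction m a x ⊤ φx φx' = hypInf m a x ⊤)
    (huniq : ∀ ψ ψ' : ℝ → Conf d N, InD m 1 ⊤ ψ ψ' →
      hypAction m a x ⊤ ψ ψ' = hypInf m a x ⊤ → ∀ t : ℝ, 1 ≤ t → ψ t = φx t)
    (w : Conf d N) (hw : HasDerivWithinAt φx w (Set.Ici (1:ℝ)) 1) :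
    ∀ ε > (0:ℝ), ∀ᶠ y in nhdsWithin x (setX m),
      |hypValue m a y - hypValue m a x + minner m (a + w) (y - x)| ≤
        ε * mnorm m (y - x) := by
  have htop := hypAction_ne_top_of_unique hm hN ha hmin huniq
  intro ε hε
  obtain ⟨ρ, hρ, h⟩ := abs_hypInf_sub_add_minner_le hm ha.2 hx hφx hmin htop huniq hw hε
  obtain ⟨K, hK, hKle⟩ := exists_mnorm_le_norm (d := d) m hm
  filter_upwards [self_mem_nhdsWithin,
    mem_nhdsWithin_of_mem_nhds (Metric.ball_mem_nhds x (div_pos hρ hK))] with y hy hyx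
  rw [Metric.mem_ball, dist_eq_norm, lt_div_iff₀ hK, mul_comm] at hyx
  have heq : hypValue m a y - hypValue m a x + minner m (a + w) (y - x) =
      (hypInf m a y ⊤).toReal - (hypInf m a x ⊤).toReal + minner m w (y - x) := by
    rw [hypValue, hypValue, minner_add_left, minner_sub_right m a]; ring
  rcases (mnorm_nonneg m (y - x)).eq_or_lt with h0 | h0
  · obtain ⟨C, -, hC⟩ := exists_norm_le_mnorm (d := d) m hm
    have hyx' : y = x := by
      have h1 := hC (y - x)
      rw [← h0, mul_zero] at h1
      exact sub_eq_zero.1 (norm_le_zero_iff.1 h1)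
    subst hyx'
    simp [minner, mnorm]
  · rw [heq]
    exact h y hy h0 ((hKle _).trans_lt hyx)

end NBodyHJ
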